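/- For every integer p ≥ 7 one has (p/(p−1))^{p−1} · 2(p−3)/(p−1)² < 6/p. -/

import Mathlib

open Set Real Filter

/-- The exponent `α = 2/(p-1)`. -/
noncomputable def alphaP (p : ℕ) : ℝ := 2 / ((p : ℝ) - 1)

/-- `b₀ = (2(p+1)/(p-1)²)^(1/(p-1))`, the constant solution. -/
noncomputable def bZero (p : ℕ) : ℝ :=
  (2 * ((p : ℝ) + 1) / ((p : ℝ) - 1) ^ 2) ^ ((1 : ℝ) / ((p : ℝ) - 1))

/-- `b∞ = (2(p-3)/(p-1)²)^(1/(p-1))`. -/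
noncomputable def bInfty (p : ℕ) : ℝ :=
  (2 * ((p : ℝ) - 3) / ((p : ℝ) - 1) ^ 2) ^ ((1 : ℝ) / ((p : ℝ) - 1))

/-- The singular static solution `u∞(ρ) = b∞ ρ^(-α)`. -/
noncomputable def uInfty (p : ℕ) (ρ : ℝ) : ℝ := bInfty p * ρ ^ (-(alphaP p))

/-- The self-similar profile equation
`(1-ρ²)u'' + (2/ρ - (2+2α)ρ)u' - α(α+1)u + u^p = 0` at the point `ρ`. -/
def ProfileEq (p : ℕ) (u : ℝ → ℝ) (ρ : ℝ) : Prop :=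
  (1 - ρ ^ 2) * deriv (deriv u) ρ + (2 / ρ - (2 + 2 * alphaP p) * ρ) * deriv u ρ
    - alphaP p * (alphaP p + 1) * u ρ + u ρ ^ p = 0

/-- For every integer `p ≥ 7`,
`(p/(p-1))^(p-1) · 2(p-3)/(p-1)² < 6/p`. -/
theorem key_numeric_estimate (p : ℕ) (hp : 7 ≤ p) :
    ((p : ℝ) / ((p : ℝ) - 1)) ^ (p - 1) * (2 * ((p : ℝ) - 3) / ((p : ℝ) - 1) ^ 2)
      < 6 / (p : ℝ) := by
  obtain ⟨n, rfl⟩ : ∃ n, p = n + 1 := ⟨p - 1, by omega⟩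
  have hn : (6 : ℝ) ≤ n := by exact_mod_cast (by omega : 6 ≤ n)
  have hn0 : (0 : ℝ) < n := by linarith
  have h1 : (((n + 1 : ℕ) : ℝ) / (((n + 1 : ℕ) : ℝ) - 1)) ^ (n + 1 - 1) < 3 := by
    have e : ((n + 1 : ℕ) : ℝ) / (((n + 1 : ℕ) : ℝ) - 1) = 1 / (n : ℝ) + 1 := by
      push_cast
      rw [add_sub_cancel_right]
      field_simp
      ring
    rw [e, Nat.add_sub_cancel]
    calc (1 / (n : ℝ) + 1) ^ n ≤ (Real.exp (1 / (n : ℝ))) ^ n := by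
          gcongr
          exact Real.add_one_le_exp _
      _ = Real.exp 1 := by
          rw [← Real.exp_nat_mul]
          congr 1
          field_simp
      _ < 3 := by linarith [Real.exp_one_lt_d9]
  have h2 : 2 * (((n + 1 : ℕ) : ℝ) - 3) / (((n + 1 : ℕ) : ℝ) - 1) ^ 2
      ≤ 2 / ((n + 1 : ℕ) : ℝ) := by
    push_cast
    rw [add_sub_cancel_right, div_le_div_iff₀ (by positivity) (by positivity)]
    nlinarith
  have h3 : 0 < 2 * (((n + 1 : ℕ) : ℝ) - 3) / (((n + 1 : ℕ) : ℝ) - 1) ^ 2 := by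
    push_cast
    rw [add_sub_cancel_right]
    apply div_pos (by linarith) (by positivity)
  calc _ < 3 * (2 * (((n + 1 : ℕ) : ℝ) - 3) / (((n + 1 : ℕ) : ℝ) - 1) ^ 2) :=
        mul_lt_mul_of_pos_right h1 h3
    _ ≤ 3 * (2 / ((n + 1 : ℕ) : ℝ)) := by linarith
    _ = 6 / ((n + 1 : ℕ) : ℝ) := by ring
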